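/- Assume Q_k = k + O(1) and fix 0 < ε < α_θ + 1. Let X, X', Y, Y' be sequences of positive reals with ln X_k = α_θ·ln k + o(1), ln X'_k = ln X_k + O(k^{−ε}), φ_j(X,Y) = Q_j and φ_j(X',Y') = Q_j for all j. Then ln Y'_j = ln Y_j + O(j^{−ε}) as j → ∞. -/

import Mathlib

open Filter Asymptotics MeasureTheory
open scoped ENNReal Topology

/-- `Theta θ E' E` is the argument of the complex number `E' + E·e^{iθ}`;
for `0 < θ < π` and `E', E > 0` it lies in `(0, θ)` and equals
`arctan (sin θ / (E'/E + cos θ))` with the branch taken in `(0, θ)`. -/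
noncomputable def Theta (θ E' E : ℝ) : ℝ :=
  Complex.arg ((E' : ℂ) + (E : ℂ) * Complex.exp (θ * Complex.I))

/-- `phi θ X Y j = (1/π) · ∑_{k ≥ 1} Θ(X_k, Y_j) ∈ (0, ∞]`, where sequences are
indexed by `ℕ` and only the values at indices `k ≥ 1` are used. -/
noncomputable def phi (θ : ℝ) (X Y : ℕ → ℝ) (j : ℕ) : ℝ≥0∞ :=
  ENNReal.ofReal (1 / Real.pi) * ∑' k : ℕ, ENNReal.ofReal (Theta θ (X (k + 1)) (Y j))

/-- `Pker θ E E' = E·E' / (E² + 2·cos θ·E·E' + E'²)`. -/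
noncomputable def Pker (θ E E' : ℝ) : ℝ :=
  E * E' / (E ^ 2 + 2 * Real.cos θ * E * E' + E' ^ 2)

/-- The drift `D_α = (1/π) ∫_0^∞ Θ(s^α, 1) ds`. -/
noncomputable def Drift (θ α : ℝ) : ℝ :=
  (1 / Real.pi) * ∫ s in Set.Ioi (0 : ℝ), Theta θ (s ^ α) 1

/-- `S_ε = ∫_0^∞ s^{-ε} / (s^{α_θ} + 2 cos θ + s^{-α_θ}) ds` with `α_θ = 1 + θ/π`. -/
noncomputable def Sfun (θ ε : ℝ) : ℝ :=
  ∫ s in Set.Ioi (0 : ℝ), s ^ (-ε) /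
    (s ^ (1 + θ / Real.pi) + 2 * Real.cos θ + s ^ (-(1 + θ / Real.pi)))

/-!
In logarithmic coordinates `Θ(X, Y) = g (log Y - log X)`, where `g t = Θ(1, e^t)` is an increasing
function whose slope is comparable to `e^{-|t|}`. Write `x k = log X_k` and `y = α log R`.

Changing `x k ≈ α log k` by `O(k^{-ε})` changes `∑ g (y - x k)` by at most a constant times
`∑ k^{-ε} min ((k/R)^α) ((k/R)^{-α}) = R^{-ε} ∑ min ((k/R)^{α-ε}) ((k/R)^{-(α+ε)})`, which is
`O(R^{1-ε})` by comparison with an integral; convergence of that integral at `0` is the condition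
`ε < α + 1`. On the other hand, about `R` of the points `x k` lie within `O(1)` of `y`, so moving
`y` by a bounded amount `δ` changes the sum by at least a multiple of `R |δ|`. As the two sums agree
the displacement of `y` is therefore `O(R^{-ε})`. Its a priori boundedness comes from the
monotonicity of `g`. Finally `∑ g (y - x k) = O(R)`, so `j = O(Y_j^{1/α})` because the sum for `Y_j`
grows like `j`.
-/

section RiemannSum

open Real Set

theorem summable_and_tsum_add_one_le_integral_of_antitoneOn {f : ℝ → ℝ}
    (hanti : AntitoneOn f (Ioi 0)) (hint : IntegrableOn f (Ioi 0))
    (hnonneg : ∀ u ∈ Ioi 0, 0 ≤ f u) :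
    Summable (fun k : ℕ => f (k + 1)) ∧ ∑' k : ℕ, f (k + 1) ≤ ∫ u in Ioi 0, f u := by
  have hsub : Ioi ((1 : ℕ) : ℝ) ⊆ Ioi 0 := Ioi_subset_Ioi (by simp)
  have hanti₁ : AntitoneOn f (Ici ((1 : ℕ) : ℝ)) :=
    hanti.mono (Ici_subset_Ioi.mpr (by simp))
  have hnonneg₁ : ∀ u ∈ Ioi ((1 : ℕ) : ℝ), 0 ≤ f u := fun u hu => hnonneg u (hsub hu)
  have hsummable : Summable (fun k : ℕ => f (k + 1)) := by
    exact_mod_cast (summable_nat_add_iff 1).mpr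
      (hanti₁.summable_of_integrableOn_Ioi (hint.mono_set hsub) hnonneg₁)
  refine ⟨hsummable, ?_⟩
  have htail : ∑' k : ℕ, f ((k + 1 : ℕ) + 1) ≤ ∫ u in Ioi 1, f u := by
    simpa using hanti₁.tsum_comp_add_le_integral 1 (hint.mono_set hsub) hnonneg₁
  have hhead : f 1 ≤ ∫ u in (0 : ℝ)..1, f u := by
    have hint₀ : IntervalIntegrable f volume 0 1 :=
      (intervalIntegrable_iff_integrableOn_Ioc_of_le zero_le_one).mpr
        (hint.mono_set Ioc_subset_Ioi_self)
    simpa using intervalIntegral.integral_mono_on_of_le_Ioo zero_le_one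
      intervalIntegrable_const hint₀ fun u hu => hanti hu.1 (mem_Ioi.mpr one_pos) hu.2.le
  have hsplit := intervalIntegral.integral_interval_add_Ioi hint (hint.mono_set hsub)
  rw [hsummable.tsum_eq_zero_add, ← hsplit]
  simpa using add_le_add hhead htail

theorem summable_and_tsum_comp_div_le_mul_integral {h : ℝ → ℝ}
    (hanti : AntitoneOn h (Ioi 0)) (hint : IntegrableOn h (Ioi 0))
    (hnonneg : ∀ u ∈ Ioi 0, 0 ≤ h u) {R : ℝ} (hR : 0 < R) :
    Summable (fun k : ℕ => h ((k + 1) / R)) ∧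
      ∑' k : ℕ, h ((k + 1) / R) ≤ R * ∫ u in Ioi 0, h u := by
  have hpos : ∀ u ∈ Ioi (0 : ℝ), u / R ∈ Ioi (0 : ℝ) := fun u hu => div_pos hu hR
  have hint' : IntegrableOn (fun u => h (u / R)) (Ioi 0) := by
    simpa only [div_eq_inv_mul, mul_zero] using
      (integrableOn_Ioi_comp_mul_left_iff h 0 (inv_pos.mpr hR)).mpr (by simpa using hint)
  have hscale : ∫ u in Ioi 0, h (u / R) = R * ∫ u in Ioi 0, h u := by
    simpa [div_eq_inv_mul] using integral_comp_mul_left_Ioi h 0 (inv_pos.mpr hR)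
  rw [← hscale]
  exact summable_and_tsum_add_one_le_integral_of_antitoneOn (f := fun u => h (u / R))
    (fun u hu v hv huv => hanti (hpos u hu) (hpos v hv) (by gcongr)) hint'
    fun u hu => hnonneg _ (hpos u hu)

theorem integrableOn_min_rpow {s r : ℝ} (hs : -1 < s) (hr : 1 < r) :
    IntegrableOn (fun u : ℝ => min (u ^ s) (u ^ (-r))) (Ioi 0) := by
  have hmeas : Measurable fun u : ℝ => min (u ^ s) (u ^ (-r)) := by fun_prop
  have hnonneg : ∀ u ∈ Ioi (0 : ℝ), 0 ≤ min (u ^ s) (u ^ (-r)) := fun u hu =>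
    le_min (rpow_nonneg hu.le _) (rpow_nonneg hu.le _)
  rw [← Ioc_union_Ioi_eq_Ioi zero_le_one]
  refine IntegrableOn.union ?_ ?_
  · have hlow : IntegrableOn (fun u : ℝ => u ^ s) (Ioc 0 1) :=
      (intervalIntegrable_iff_integrableOn_Ioc_of_le zero_le_one).mp
        (intervalIntegral.intervalIntegrable_rpow' hs)
    refine hlow.mono' hmeas.aestronglyMeasurable <|
      (ae_restrict_mem measurableSet_Ioc).mono fun u hu => ?_
    rw [norm_of_nonneg (hnonneg u hu.1)]
    exact min_le_left _ _
  · have hsub : Ioi (1 : ℝ) ⊆ Ioi 0 := Ioi_subset_Ioi zero_le_one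
    have hhigh := integrableOn_Ioi_rpow_of_lt (neg_lt_neg hr) one_pos
    refine hhigh.mono' hmeas.aestronglyMeasurable <|
      (ae_restrict_mem measurableSet_Ioi).mono fun u hu => ?_
    rw [norm_of_nonneg (hnonneg u (hsub hu))]
    exact min_le_right _ _

theorem min_rpow_le_min_rpow_min_zero {s r u : ℝ} (hu : 0 < u) (hr : 0 ≤ r) (hrs : -r ≤ s) :
    min (u ^ s) (u ^ (-r)) ≤ min (u ^ min s 0) (u ^ (-r)) := by
  refine le_min ?_ (min_le_right _ _)
  rcases le_total u 1 with hu1 | hu1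
  · exact (min_le_left _ _).trans
      (rpow_le_rpow_of_exponent_ge hu hu1 (min_le_left _ _))
  · exact (min_le_right _ _).trans
      (rpow_le_rpow_of_exponent_le hu1 (le_min hrs (neg_nonpos.mpr hr)))

theorem exists_summable_and_tsum_min_rpow_le {s r : ℝ} (hs : -1 < s) (hr : 1 < r) :
    ∃ K, ∀ R : ℝ, 0 < R →
      Summable (fun k : ℕ => min (((k + 1) / R) ^ s) (((k + 1) / R) ^ (-r))) ∧
        ∑' k : ℕ, min (((k + 1) / R) ^ s) (((k + 1) / R) ^ (-r)) ≤ K * R := by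
  set h : ℝ → ℝ := fun u => min (u ^ min s 0) (u ^ (-r))
  have hanti : AntitoneOn h (Ioi 0) := fun u hu v _ huv =>
    min_le_min (rpow_le_rpow_of_nonpos hu huv (min_le_right _ _))
      (rpow_le_rpow_of_nonpos hu huv (by linarith))
  have hnonneg : ∀ u ∈ Ioi 0, 0 ≤ h u := fun u hu =>
    le_min (rpow_nonneg hu.le _) (rpow_nonneg hu.le _)
  have hint : IntegrableOn h (Ioi 0) := integrableOn_min_rpow (lt_min hs (by norm_num)) hr
  refine ⟨∫ u in Ioi 0, h u, fun R hR => ?_⟩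
  obtain ⟨hsum, hle⟩ := summable_and_tsum_comp_div_le_mul_integral hanti hint hnonneg hR
  have hcomp : ∀ k : ℕ, min (((k + 1) / R) ^ s) (((k + 1) / R) ^ (-r)) ≤ h ((k + 1) / R) := fun k =>
    min_rpow_le_min_rpow_min_zero (by positivity) (by linarith) (by linarith)
  have hsum' := hsum.of_nonneg_of_le (fun k => by positivity) hcomp
  exact ⟨hsum', (hsum'.tsum_le_tsum hcomp hsum).trans (hle.trans_eq (mul_comm _ _))⟩

end RiemannSum

section Sigmoid

open Real Set

/-- A sigmoid whose slope is exponentially localised at the origin: an increasing `C¹` function on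
the line, vanishing at `-∞`, with slope `O(exp (-|t|))`. -/
structure IsLocalizedSigmoid (g : ℝ → ℝ) : Prop where
  contDiff : ContDiff ℝ 1 g
  deriv_pos : ∀ t, 0 < deriv g t
  deriv_le : ∃ C, ∀ t, deriv g t ≤ C * exp (-|t|)
  tendsto_atBot : Tendsto g atBot (𝓝 0)

namespace IsLocalizedSigmoid

variable {g : ℝ → ℝ}

theorem differentiable (hg : IsLocalizedSigmoid g) : Differentiable ℝ g :=
  hg.contDiff.differentiable one_ne_zero

theorem strictMono (hg : IsLocalizedSigmoid g) : StrictMono g :=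
  strictMono_of_deriv_pos hg.deriv_pos

theorem nonneg (hg : IsLocalizedSigmoid g) (t : ℝ) : 0 ≤ g t :=
  hg.strictMono.monotone.le_of_tendsto hg.tendsto_atBot t

theorem exists_pos_deriv_le (hg : IsLocalizedSigmoid g) :
    ∃ C > 0, ∀ t, deriv g t ≤ C * exp (-|t|) := by
  obtain ⟨C, hC⟩ := hg.deriv_le
  exact ⟨C, by simpa using (hg.deriv_pos 0).trans_le (hC 0), hC⟩

theorem le_mul_exp (hg : IsLocalizedSigmoid g) {C : ℝ} (hC0 : 0 ≤ C)
    (hC : ∀ t, deriv g t ≤ C * exp (-|t|)) (t : ℝ) : g t ≤ C * exp t := by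
  have hmono : Monotone fun t => C * exp t - g t := by
    refine monotone_of_deriv_nonneg
      ((differentiable_exp.const_mul C).sub hg.differentiable) fun t => ?_
    rw [deriv_fun_sub (by fun_prop) (hg.differentiable t), deriv_const_mul _ (by fun_prop),
      Real.deriv_exp, sub_nonneg]
    exact (hC t).trans (by gcongr; exact neg_abs_le t)
  have hlim : Tendsto (fun t => C * exp t - g t) atBot (𝓝 0) := by
    simpa using (tendsto_exp_atBot.const_mul C).sub hg.tendsto_atBot
  exact sub_nonneg.mp (hmono.le_of_tendsto hlim t)

theorem le_two_mul (hg : IsLocalizedSigmoid g) {C : ℝ} (hC0 : 0 ≤ C)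
    (hC : ∀ t, deriv g t ≤ C * exp (-|t|)) {t : ℝ} (ht : 0 ≤ t) : g t ≤ 2 * C := by
  have hanti : Antitone fun t => g t + C * exp (-t) := by
    refine antitone_of_deriv_nonpos (hg.differentiable.add (by fun_prop)) fun t => ?_
    rw [deriv_fun_add (hg.differentiable t) (by fun_prop), deriv_const_mul _ (by fun_prop),
      deriv_exp (by fun_prop), deriv_neg]
    have : deriv g t ≤ C * exp (-t) := (hC t).trans (by gcongr; exact le_abs_self t)
    linarith
  calc g t ≤ g t + C * exp (-t) := le_add_of_nonneg_right (by positivity)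
    _ ≤ g 0 + C := by simpa using hanti ht
    _ ≤ 2 * C := by linarith [(hg.le_mul_exp hC0 hC 0).trans_eq (by simp : C * exp 0 = C)]

theorem exists_le_mul_min_one_exp (hg : IsLocalizedSigmoid g) :
    ∃ C ≥ 0, ∀ t, g t ≤ C * min 1 (exp t) := by
  obtain ⟨C, hC0, hC⟩ := hg.exists_pos_deriv_le
  refine ⟨2 * C, by positivity, fun t => ?_⟩
  rcases le_total 0 t with ht | ht
  · simpa [min_eq_left (one_le_exp ht)] using hg.le_two_mul hC0.le hC ht
  · rw [min_eq_right (exp_le_one_iff.mpr ht)]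
    exact (hg.le_mul_exp hC0.le hC t).trans (by gcongr; linarith)

theorem exists_abs_sub_le_mul_exp (hg : IsLocalizedSigmoid g) (B : ℝ) :
    ∃ C ≥ 0, ∀ a b, |b - a| ≤ B → |g b - g a| ≤ C * |b - a| * exp (-|a|) := by
  obtain ⟨C, hC0, hC⟩ := hg.exists_pos_deriv_le
  refine ⟨C * exp B, by positivity, fun a b hab => ?_⟩
  have hderiv : ∀ t ∈ uIcc a b, ‖deriv g t‖ ≤ C * exp B * exp (-|a|) := by
    intro t ht
    have hta : |t - a| ≤ B := (abs_sub_left_of_mem_uIcc ht).trans hab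
    have hexp : -|t| ≤ B + -|a| := by
      have := abs_sub_abs_le_abs_sub a t
      rw [abs_sub_comm] at this
      linarith
    calc ‖deriv g t‖ = deriv g t := norm_of_nonneg (hg.deriv_pos t).le
      _ ≤ C * exp (-|t|) := hC t
      _ ≤ C * exp (B + -|a|) := by gcongr
      _ = C * exp B * exp (-|a|) := by rw [exp_add, mul_assoc]
  have := (convex_uIcc a b).norm_image_sub_le_of_norm_deriv_le
    (fun t _ => hg.differentiable t) hderiv left_mem_uIcc right_mem_uIcc
  rwa [norm_eq_abs, norm_eq_abs, mul_right_comm] at this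

theorem exists_mul_sub_le_sub (hg : IsLocalizedSigmoid g) {T : ℝ} (hT : 0 ≤ T) :
    ∃ c > 0, ∀ a b, -T ≤ a → a ≤ b → b ≤ T → c * (b - a) ≤ g b - g a := by
  obtain ⟨t₀, -, hmin⟩ := isCompact_Icc.exists_isMinOn
    (nonempty_Icc.mpr (neg_le_self hT)) (hg.contDiff.continuous_deriv le_rfl).continuousOn
  refine ⟨deriv g t₀, hg.deriv_pos t₀, fun a b ha hab hb => ?_⟩
  exact (convex_Icc (-T) T).mul_sub_le_image_sub_of_le_deriv
    hg.differentiable.continuous.continuousOn hg.differentiable.differentiableOn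
    (fun t ht => hmin (interior_subset ht)) a ⟨ha, hab.trans hb⟩ b ⟨ha.trans hab, hb⟩ hab

end IsLocalizedSigmoid

theorem exp_mul_log_sub_le {α A R v z : ℝ} (hR : 0 < R) (hv : 0 < v) (hz : |z - α * log v| ≤ A) :
    exp (α * log R - z) ≤ exp A * (v / R) ^ (-α) := by
  rw [rpow_def_of_pos (div_pos hv hR), log_div hv.ne' hR.ne', ← exp_add, exp_le_exp]
  linarith [neg_le_of_abs_le hz]

theorem exp_sub_mul_log_le {α A R v z : ℝ} (hR : 0 < R) (hv : 0 < v) (hz : |z - α * log v| ≤ A) :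
    exp (z - α * log R) ≤ exp A * (v / R) ^ α := by
  rw [rpow_def_of_pos (div_pos hv hR), log_div hv.ne' hR.ne', ← exp_add, exp_le_exp]
  linarith [le_of_abs_le hz]

theorem exp_neg_abs_mul_log_sub_le {α A R v z : ℝ} (hR : 0 < R) (hv : 0 < v)
    (hz : |z - α * log v| ≤ A) :
    exp (-|α * log R - z|) ≤ exp A * min ((v / R) ^ α) ((v / R) ^ (-α)) := by
  rw [mul_min_of_nonneg _ _ (exp_pos A).le]
  refine le_min (le_trans ?_ (exp_sub_mul_log_le hR hv hz))
    (le_trans ?_ (exp_mul_log_sub_le hR hv hz)) <;> rw [exp_le_exp]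
  · linarith [le_abs_self (α * log R - z)]
  · exact neg_abs_le _

theorem rpow_neg_mul_min_rpow (α ε : ℝ) {R v : ℝ} (hR : 0 < R) (hv : 0 < v) :
    v ^ (-ε) * min ((v / R) ^ α) ((v / R) ^ (-α)) =
      R ^ (-ε) * min ((v / R) ^ (α - ε)) ((v / R) ^ (-(α + ε))) := by
  have hu : 0 < v / R := div_pos hv hR
  have hv_eq : v ^ (-ε) = R ^ (-ε) * (v / R) ^ (-ε) := by
    rw [← mul_rpow hR.le hu.le, mul_div_cancel₀ v hR.ne']
  rw [hv_eq, mul_assoc, mul_min_of_nonneg _ _ (rpow_nonneg hu.le _), ← rpow_add hu, ← rpow_add hu,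
    neg_add_eq_sub, neg_add_rev]

theorem mul_add_one_rpow_neg_le {B ε : ℝ} (hB : 0 ≤ B) (hε : 0 ≤ ε) (k : ℕ) :
    B * (k + 1 : ℝ) ^ (-ε) ≤ B :=
  mul_le_of_le_one_right hB (rpow_le_one_of_one_le_of_nonpos (by simp) (neg_nonpos.mpr hε))

theorem abs_sub_mul_log_le_of_mem_Ico {α A R z : ℝ} {k : ℕ} (hα : 0 ≤ α) (hR : 1 ≤ R)
    (hk : k ∈ Finset.Ico ⌈R⌉₊ (2 * ⌈R⌉₊)) (hz : |z - α * log (k + 1)| ≤ A) :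
    |z - α * log R| ≤ α * log 4 + A := by
  obtain ⟨hkl, hku⟩ := Finset.mem_Ico.mp hk
  have hceil := Nat.ceil_lt_add_one (zero_le_one.trans hR)
  have hlow : R ≤ k + 1 := (Nat.ceil_le.mp hkl).trans (by simp)
  have hhigh : (k + 1 : ℝ) ≤ 4 * R := by
    have : (k + 1 : ℝ) ≤ 2 * ⌈R⌉₊ := mod_cast hku
    linarith
  have hlog_low : α * log R ≤ α * log (k + 1) := by gcongr
  have hlog_high : α * log (k + 1) ≤ α * log 4 + α * log R := by
    rw [← mul_add, ← log_mul (by norm_num) (by positivity)]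
    gcongr
  have := abs_le.mp hz
  have : 0 ≤ α * log 4 := by positivity
  exact abs_le.mpr ⟨by linarith, by linarith⟩

variable {g : ℝ → ℝ} {x x' : ℕ → ℝ} {α A B ε : ℝ}

namespace IsLocalizedSigmoid

theorem exists_summable_and_tsum_le (hg : IsLocalizedSigmoid g) (hα : 1 < α)
    (hx : ∀ k : ℕ, |x k - α * log (k + 1)| ≤ A) :
    ∃ K, ∀ R, 0 < R → Summable (fun k => g (α * log R - x k)) ∧
      ∑' k, g (α * log R - x k) ≤ K * R := by
  obtain ⟨C, hC0, hC⟩ := hg.exists_le_mul_min_one_exp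
  obtain ⟨K, hK⟩ := exists_summable_and_tsum_min_rpow_le (s := 0) (by norm_num) hα
  have hA : 0 ≤ A := (abs_nonneg _).trans (hx 0)
  refine ⟨C * exp A * K, fun R hR => ?_⟩
  obtain ⟨hsum, hle⟩ := hK R hR
  have hterm : ∀ k : ℕ, g (α * log R - x k) ≤
      C * exp A * min (((k + 1) / R) ^ (0 : ℝ)) (((k + 1) / R) ^ (-α)) := fun k => by
    refine (hC _).trans ?_
    rw [mul_assoc, mul_min_of_nonneg _ _ (exp_pos A).le, rpow_zero, mul_one]
    gcongr
    · exact one_le_exp hA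
    · exact exp_mul_log_sub_le hR (by positivity) (hx k)
  have hsum' := (hsum.mul_left (C * exp A)).of_nonneg_of_le (fun k => hg.nonneg _) hterm
  refine ⟨hsum', ?_⟩
  calc ∑' k, g (α * log R - x k)
      ≤ ∑' k : ℕ, C * exp A * min (((k + 1) / R) ^ (0 : ℝ)) (((k + 1) / R) ^ (-α)) :=
        hsum'.tsum_le_tsum hterm (hsum.mul_left _)
    _ = C * exp A * ∑' k : ℕ, min (((k + 1) / R) ^ (0 : ℝ)) (((k + 1) / R) ^ (-α)) := tsum_mul_left
    _ ≤ C * exp A * (K * R) := by gcongr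
    _ = C * exp A * K * R := by ring

theorem summable_comp_sub (hg : IsLocalizedSigmoid g) (hα : 1 < α)
    (hx : ∀ k : ℕ, |x k - α * log (k + 1)| ≤ A) (y : ℝ) : Summable fun k => g (y - x k) := by
  obtain ⟨K, hK⟩ := hg.exists_summable_and_tsum_le hα hx
  have hy : α * log (exp (y / α)) = y := by rw [log_exp, mul_div_cancel₀ y (by positivity)]
  simpa only [hy] using (hK _ (exp_pos (y / α))).1

theorem exists_abs_comp_sub_sub_comp_sub_le (hg : IsLocalizedSigmoid g) (hε : 0 ≤ ε)
    (hx : ∀ k : ℕ, |x k - α * log (k + 1)| ≤ A)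
    (hxx' : ∀ k : ℕ, |x' k - x k| ≤ B * (k + 1 : ℝ) ^ (-ε)) :
    ∃ C ≥ 0, ∀ R, 0 < R → ∀ k : ℕ, |g (α * log R - x k) - g (α * log R - x' k)| ≤
      C * R ^ (-ε) * min (((k + 1) / R) ^ (α - ε)) (((k + 1) / R) ^ (-(α + ε))) := by
  have hB : 0 ≤ B := by simpa using (abs_nonneg _).trans (hxx' 0)
  obtain ⟨C, hC0, hC⟩ := hg.exists_abs_sub_le_mul_exp B
  refine ⟨C * B * exp A, by positivity, fun R hR k => ?_⟩
  have hdiff : (α * log R - x' k) - (α * log R - x k) = -(x' k - x k) := by ring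
  have hle : |x' k - x k| ≤ B := (hxx' k).trans (mul_add_one_rpow_neg_le hB hε k)
  have hlip := hC (α * log R - x k) (α * log R - x' k) (by rwa [hdiff, abs_neg])
  rw [hdiff, abs_neg] at hlip
  rw [abs_sub_comm]
  calc |g (α * log R - x' k) - g (α * log R - x k)|
      ≤ C * |x' k - x k| * exp (-|α * log R - x k|) := hlip
    _ ≤ C * (B * (k + 1 : ℝ) ^ (-ε)) *
          (exp A * min (((k + 1) / R) ^ α) (((k + 1) / R) ^ (-α))) := by
        gcongr
        · exact hxx' k
        · exact exp_neg_abs_mul_log_sub_le hR (by positivity) (hx k)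
    _ = C * B * exp A *
          ((k + 1 : ℝ) ^ (-ε) * min (((k + 1) / R) ^ α) (((k + 1) / R) ^ (-α))) := by ring
    _ = C * B * exp A * R ^ (-ε) *
          min (((k + 1) / R) ^ (α - ε)) (((k + 1) / R) ^ (-(α + ε))) := by
        rw [rpow_neg_mul_min_rpow α ε hR (by positivity), ← mul_assoc]

theorem exists_abs_tsum_sub_le (hg : IsLocalizedSigmoid g) (hα : 1 < α) (hε0 : 0 ≤ ε)
    (hε : ε < α + 1) (hx : ∀ k : ℕ, |x k - α * log (k + 1)| ≤ A)
    (hxx' : ∀ k : ℕ, |x' k - x k| ≤ B * (k + 1 : ℝ) ^ (-ε)) :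
    ∃ K, ∀ R, 0 < R →
      |∑' k, (g (α * log R - x k) - g (α * log R - x' k))| ≤ K * R ^ (-ε) * R := by
  obtain ⟨C, hC0, hC⟩ := hg.exists_abs_comp_sub_sub_comp_sub_le hε0 hx hxx'
  obtain ⟨K, hK⟩ := exists_summable_and_tsum_min_rpow_le (s := α - ε) (r := α + ε)
    (by linarith) (by linarith)
  refine ⟨C * K, fun R hR => ?_⟩
  obtain ⟨hsum, hle⟩ := hK R hR
  rw [← norm_eq_abs]
  calc ‖∑' k, (g (α * log R - x k) - g (α * log R - x' k))‖
      ≤ C * R ^ (-ε) *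
          ∑' k : ℕ, min (((k + 1) / R) ^ (α - ε)) (((k + 1) / R) ^ (-(α + ε))) :=
        tsum_of_norm_bounded (hsum.hasSum.mul_left _) (hC R hR)
    _ ≤ C * R ^ (-ε) * (K * R) := by gcongr
    _ = C * K * R ^ (-ε) * R := by ring

theorem exists_mul_sub_le_tsum_sub (hg : IsLocalizedSigmoid g) (hα : 1 < α)
    (hx : ∀ k : ℕ, |x k - α * log (k + 1)| ≤ A) (hB : 0 ≤ B) :
    ∃ c > 0, ∀ R, 1 ≤ R → ∀ y₁ y₂, y₁ ≤ y₂ → |y₁ - α * log R| ≤ B → |y₂ - α * log R| ≤ B →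
      c * R * (y₂ - y₁) ≤ ∑' k, (g (y₂ - x k) - g (y₁ - x k)) := by
  have hA : 0 ≤ A := (abs_nonneg _).trans (hx 0)
  obtain ⟨c, hc, hslope⟩ := hg.exists_mul_sub_le_sub (T := α * log 4 + A + B) (by positivity)
  refine ⟨c, hc, fun R hR y₁ y₂ hy hy₁ hy₂ => ?_⟩
  set N := ⌈R⌉₊
  have hterm : ∀ k ∈ Finset.Ico N (2 * N), c * (y₂ - y₁) ≤ g (y₂ - x k) - g (y₁ - x k) := by
    intro k hk
    have hxk := abs_le.mp (abs_sub_mul_log_le_of_mem_Ico (by linarith) hR hk (hx k))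
    have := abs_le.mp hy₁
    have := abs_le.mp hy₂
    simpa only [sub_sub_sub_cancel_right] using
      hslope (y₁ - x k) (y₂ - x k) (by linarith) (by linarith) (by linarith)
  have hcard : (Finset.Ico N (2 * N)).card = N := by rw [Nat.card_Ico]; omega
  have hnonneg : ∀ k, 0 ≤ g (y₂ - x k) - g (y₁ - x k) := fun k =>
    sub_nonneg.mpr (hg.strictMono.monotone (by linarith))
  have hsum : Summable fun k => g (y₂ - x k) - g (y₁ - x k) :=
    (hg.summable_comp_sub hα hx y₂).sub (hg.summable_comp_sub hα hx y₁)
  calc c * R * (y₂ - y₁) = R * (c * (y₂ - y₁)) := by ring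
    _ ≤ N * (c * (y₂ - y₁)) := by
        have := sub_nonneg.mpr hy
        gcongr
        exact Nat.le_ceil R
    _ ≤ ∑ k ∈ Finset.Ico N (2 * N), (g (y₂ - x k) - g (y₁ - x k)) := by
        simpa only [hcard, nsmul_eq_mul] using Finset.card_nsmul_le_sum _ _ _ hterm
    _ ≤ ∑' k, (g (y₂ - x k) - g (y₁ - x k)) := hsum.sum_le_tsum _ fun k _ => hnonneg k

theorem exists_mul_abs_sub_le_abs_tsum_sub (hg : IsLocalizedSigmoid g) (hα : 1 < α)
    (hx : ∀ k : ℕ, |x k - α * log (k + 1)| ≤ A) (hB : 0 ≤ B) :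
    ∃ c > 0, ∀ R, 1 ≤ R → ∀ y, |y - α * log R| ≤ B →
      c * R * |y - α * log R| ≤ |∑' k, (g (y - x k) - g (α * log R - x k))| := by
  obtain ⟨c, hc, hlower⟩ := hg.exists_mul_sub_le_tsum_sub hα hx hB
  refine ⟨c, hc, fun R hR y hy => ?_⟩
  have hself : |α * log R - α * log R| ≤ B := by simpa using hB
  rcases le_total (α * log R) y with h | h
  · rw [abs_of_nonneg (sub_nonneg.mpr h)]
    exact (hlower R hR _ _ h hself hy).trans (le_abs_self _)
  · rw [abs_sub_comm, abs_of_nonneg (sub_nonneg.mpr h), ← abs_neg, ← tsum_neg]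
    simp only [neg_sub]
    exact (hlower R hR _ _ h hy hself).trans (le_abs_self _)

end IsLocalizedSigmoid

theorem sub_le_of_tsum_comp_sub_le {ι : Type*} [Nonempty ι] {x x' : ι → ℝ} {y y' : ℝ}
    (hg : StrictMono g) (hsum : Summable fun k => g (y - x k))
    (hsum' : Summable fun k => g (y' - x' k)) (hxx' : ∀ k, x' k - x k ≤ B)
    (hle : ∑' k, g (y' - x' k) ≤ ∑' k, g (y - x k)) : y' - y ≤ B := by
  by_contra! hlt
  have hterm : ∀ k, g (y - x k) < g (y' - x' k) := fun k => hg (by linarith [hxx' k])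
  exact hle.not_gt (hsum.tsum_lt_tsum (fun k => (hterm k).le) (hterm (Classical.arbitrary ι)) hsum')

theorem IsLocalizedSigmoid.exists_abs_sub_le (hg : IsLocalizedSigmoid g) (hα : 1 < α) (hε0 : 0 ≤ ε)
    (hε : ε < α + 1) (hx : ∀ k : ℕ, |x k - α * log (k + 1)| ≤ A)
    (hxx' : ∀ k : ℕ, |x' k - x k| ≤ B * (k + 1 : ℝ) ^ (-ε)) :
    ∃ K, ∀ R, 1 ≤ R → ∀ y', ∑' k, g (y' - x' k) = ∑' k, g (α * log R - x k) →
      |y' - α * log R| ≤ K * R ^ (-ε) := by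
  have hB : 0 ≤ B := by simpa using (abs_nonneg _).trans (hxx' 0)
  have hxx'B : ∀ k, |x' k - x k| ≤ B := fun k =>
    (hxx' k).trans (mul_add_one_rpow_neg_le hB hε0 k)
  have hx' : ∀ k : ℕ, |x' k - α * log (k + 1)| ≤ B + A := fun k =>
    (abs_sub_le _ (x k) _).trans (add_le_add (hxx'B k) (hx k))
  obtain ⟨K, hK⟩ := hg.exists_abs_tsum_sub_le hα hε0 hε hx hxx'
  obtain ⟨c, hc, hlower⟩ := hg.exists_mul_abs_sub_le_abs_tsum_sub hα hx' hB
  refine ⟨K / c, fun R hR y' heq => ?_⟩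
  have hR0 : 0 < R := one_pos.trans_le hR
  have hsum := hg.summable_comp_sub hα hx (α * log R)
  have hsum' := hg.summable_comp_sub hα hx'
  have hy' : |y' - α * log R| ≤ B := abs_sub_le_iff.mpr
    ⟨sub_le_of_tsum_comp_sub_le hg.strictMono hsum (hsum' y')
        (fun k => le_of_abs_le (hxx'B k)) heq.le,
      sub_le_of_tsum_comp_sub_le hg.strictMono (hsum' y') hsum
        (fun k => (abs_sub_le_iff.mp (hxx'B k)).2) heq.ge⟩
  have hswap : ∑' k, (g (y' - x' k) - g (α * log R - x' k)) =
      ∑' k, (g (α * log R - x k) - g (α * log R - x' k)) := by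
    rw [(hsum' y').tsum_sub (hsum' _), hsum.tsum_sub (hsum' _), heq]
  have hkey : c * R * |y' - α * log R| ≤ K * R ^ (-ε) * R := by
    calc c * R * |y' - α * log R|
        ≤ |∑' k, (g (y' - x' k) - g (α * log R - x' k))| := hlower R hR y' hy'
      _ ≤ K * R ^ (-ε) * R := hswap ▸ hK R hR0
  rw [div_mul_eq_mul_div, le_div_iff₀ hc]
  exact le_of_mul_le_mul_right (by linarith) hR0

end Sigmoid

section Theta

open Real

theorem natCast_isBigO_of_sub_isBigO_one {Q : ℕ → ℝ}
    (hQ : (fun k : ℕ => Q k - k) =O[atTop] fun _ => (1 : ℝ)) :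
    (fun k : ℕ => (k : ℝ)) =O[atTop] Q := by
  have hone : (fun _ : ℕ => (1 : ℝ)) =o[atTop] fun k : ℕ => (k : ℝ) :=
    (isLittleO_const_id_atTop (1 : ℝ)).comp_tendsto tendsto_natCast_atTop_atTop
  have hequiv : Q ~[atTop] fun k : ℕ => (k : ℝ) := hQ.trans_isLittleO hone
  exact hequiv.isBigO_symm

variable {θ : ℝ}

theorem one_add_cos_pos (hθ : 0 < θ) (hθπ : θ < π) : 0 < 1 + cos θ := by
  have := cos_lt_cos_of_nonneg_of_le_pi hθ.le le_rfl hθπ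
  rw [cos_pi] at this
  linarith

theorem Theta_eq_Theta_one_exp_log_sub_log {x y : ℝ} (hx : 0 < x) (hy : 0 < y) :
    Theta θ x y = Theta θ 1 (exp (log y - log x)) := by
  have hfactor : (x : ℂ) + y * Complex.exp (θ * Complex.I) =
      x * ((1 : ℝ) + (y / x : ℝ) * Complex.exp (θ * Complex.I)) := by
    have : (x : ℂ) ≠ 0 := mod_cast hx.ne'
    push_cast
    field_simp
  rw [Theta, hfactor, Complex.arg_real_mul _ hx, Theta, exp_sub, exp_log hx, exp_log hy]

theorem mul_add_sq_le_add_two_mul_cos_add (θ x y : ℝ) :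
    (1 + cos θ) / 2 * (x + y) ^ 2 ≤ x ^ 2 + 2 * cos θ * x * y + y ^ 2 := by
  nlinarith [mul_nonneg (sub_nonneg.mpr (cos_le_one θ)) (sq_nonneg (x - y))]

theorem add_two_mul_cos_add_pos (hθ : 0 < θ) (hθπ : θ < π) {x y : ℝ} (hx : 0 < x) (hy : 0 < y) :
    0 < x ^ 2 + 2 * cos θ * x * y + y ^ 2 := by
  have := one_add_cos_pos hθ hθπ
  have hpos : 0 < (1 + cos θ) / 2 * (x + y) ^ 2 := by positivity
  exact hpos.trans_le (mul_add_sq_le_add_two_mul_cos_add θ x y)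

theorem Pker_comm (θ x y : ℝ) : Pker θ x y = Pker θ y x := by
  unfold Pker
  ring_nf

theorem Pker_pos (hθ : 0 < θ) (hθπ : θ < π) {x y : ℝ} (hx : 0 < x) (hy : 0 < y) :
    0 < Pker θ x y :=
  div_pos (mul_pos hx hy) (add_two_mul_cos_add_pos hθ hθπ hx hy)

theorem Pker_le_mul_div (hθ : 0 < θ) (hθπ : θ < π) {x y : ℝ} (hx : 0 < x) (hy : 0 < y) :
    Pker θ x y ≤ 2 / (1 + cos θ) * (x / y) := by
  have hcos := one_add_cos_pos hθ hθπ
  calc Pker θ x y ≤ x * y / ((1 + cos θ) / 2 * y ^ 2) := by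
        unfold Pker
        gcongr
        refine le_trans ?_ (mul_add_sq_le_add_two_mul_cos_add θ x y)
        gcongr
        exact le_add_of_nonneg_left hx.le
    _ = 2 / (1 + cos θ) * (x / y) := by field_simp

theorem Pker_exp_one_le (hθ : 0 < θ) (hθπ : θ < π) (t : ℝ) :
    Pker θ (exp t) 1 ≤ 2 / (1 + cos θ) * exp (-|t|) := by
  rcases le_total 0 t with ht | ht
  · rw [abs_of_nonneg ht, exp_neg, ← one_div, Pker_comm]
    exact Pker_le_mul_div hθ hθπ one_pos (exp_pos t)
  · rw [abs_of_nonpos ht, neg_neg, ← div_one (exp t)]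
    simpa only [div_one] using Pker_le_mul_div hθ hθπ (exp_pos t) one_pos

theorem continuous_Pker_exp_one (hθ : 0 < θ) (hθπ : θ < π) :
    Continuous fun t => Pker θ (exp t) 1 := by
  unfold Pker
  exact Continuous.div (by fun_prop) (by fun_prop) fun t =>
    (add_two_mul_cos_add_pos hθ hθπ (exp_pos t) one_pos).ne'

theorem one_add_mul_exp_mem_slitPlane (hθ : 0 < θ) (hθπ : θ < π) {y : ℝ} (hy : 0 < y) :
    (1 : ℝ) + y * Complex.exp (θ * Complex.I) ∈ Complex.slitPlane := by
  have him : 0 < y * sin θ := mul_pos hy (sin_pos_of_pos_of_lt_pi hθ hθπ)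
  refine Complex.mem_slitPlane_iff.mpr (Or.inr (ne_of_gt ?_))
  simpa [Complex.exp_ofReal_mul_I_im] using him

theorem im_div_one_add_mul_exp (θ y : ℝ) :
    (y * Complex.exp (θ * Complex.I) / ((1 : ℝ) + y * Complex.exp (θ * Complex.I))).im =
      sin θ * Pker θ y 1 := by
  have hnormSq : Complex.normSq ((1 : ℝ) + y * Complex.exp (θ * Complex.I)) =
      y ^ 2 + 2 * cos θ * y * 1 + 1 ^ 2 := by
    simp only [Complex.normSq_apply, Complex.add_re, Complex.add_im, Complex.re_ofReal_mul,
      Complex.im_ofReal_mul, Complex.ofReal_re, Complex.ofReal_im, Complex.exp_ofReal_mul_I_re,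
      Complex.exp_ofReal_mul_I_im]
    linear_combination y ^ 2 * sin_sq_add_cos_sq θ
  rw [Complex.div_im, hnormSq, Pker]
  simp only [Complex.add_re, Complex.add_im, Complex.re_ofReal_mul, Complex.im_ofReal_mul,
    Complex.ofReal_re, Complex.ofReal_im, Complex.exp_ofReal_mul_I_re,
    Complex.exp_ofReal_mul_I_im]
  ring

-- `Θ(1, e^t)` is the imaginary part of `log (1 + e^(t + iθ))`.
theorem hasDerivAt_Theta_one_exp (hθ : 0 < θ) (hθπ : θ < π) (t : ℝ) :
    HasDerivAt (fun t => Theta θ 1 (exp t)) (sin θ * Pker θ (exp t) 1) t := by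
  set w : ℂ := Complex.exp (θ * Complex.I)
  have hline : HasDerivAt (fun t : ℝ => ((1 : ℝ) + (exp t : ℝ) * w : ℂ)) (exp t * w) t :=
    ((hasDerivAt_exp t).ofReal_comp.mul_const w).const_add _
  have hlog := hline.clog_real (one_add_mul_exp_mem_slitPlane hθ hθπ (exp_pos t))
  have him := Complex.imCLM.hasFDerivAt.comp_hasDerivAt t hlog
  have hfun : (fun t => Theta θ 1 (exp t)) =
      Complex.imCLM ∘ fun t : ℝ => Complex.log ((1 : ℝ) + (exp t : ℝ) * w) := by
    ext t
    rw [Function.comp_apply, Complex.imCLM_apply, Complex.log_im, Theta]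
  rw [hfun, ← im_div_one_add_mul_exp]
  exact him

theorem tendsto_Theta_one_exp_atBot (θ : ℝ) :
    Tendsto (fun t => Theta θ 1 (exp t)) atBot (𝓝 0) := by
  have hline : Tendsto (fun t : ℝ => ((1 : ℝ) + (exp t : ℝ) * Complex.exp (θ * Complex.I) : ℂ))
      atBot (𝓝 1) := by
    have hexp : Tendsto (fun t => ((exp t : ℝ) : ℂ)) atBot (𝓝 0) := by
      exact_mod_cast (Complex.continuous_ofReal.tendsto 0).comp tendsto_exp_atBot
    simpa using (hexp.mul_const (Complex.exp (θ * Complex.I))).const_add ((1 : ℝ) : ℂ)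
  simpa [Theta, Function.comp_def] using
    (Complex.continuousAt_arg Complex.one_mem_slitPlane).tendsto.comp hline

theorem isLocalizedSigmoid_Theta_one_exp (hθ : 0 < θ) (hθπ : θ < π) :
    IsLocalizedSigmoid fun t => Theta θ 1 (exp t) := by
  have hsin := sin_pos_of_pos_of_lt_pi hθ hθπ
  have hderiv : deriv (fun t => Theta θ 1 (exp t)) = fun t => sin θ * Pker θ (exp t) 1 :=
    funext fun t => (hasDerivAt_Theta_one_exp hθ hθπ t).deriv
  refine ⟨contDiff_one_iff_deriv.mpr
    ⟨fun t => (hasDerivAt_Theta_one_exp hθ hθπ t).differentiableAt, ?_⟩, fun t => ?_,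
    ⟨sin θ * (2 / (1 + cos θ)), fun t => ?_⟩, tendsto_Theta_one_exp_atBot θ⟩
  · exact hderiv ▸ (continuous_Pker_exp_one hθ hθπ).const_mul _
  · exact hderiv ▸ mul_pos hsin (Pker_pos hθ hθπ (exp_pos t) one_pos)
  · rw [hderiv, mul_assoc]
    exact mul_le_mul_of_nonneg_left (Pker_exp_one_le hθ hθπ t) hsin.le

theorem toReal_phi_eq (hθ : 0 < θ) (hθπ : θ < π) {X Y : ℕ → ℝ} {j : ℕ}
    (hX : ∀ k, 1 ≤ k → 0 < X k) (hY : 0 < Y j) :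
    (phi θ X Y j).toReal = 1 / π * ∑' k, Theta θ 1 (exp (log (Y j) - log (X (k + 1)))) := by
  have hg := isLocalizedSigmoid_Theta_one_exp hθ hθπ
  rw [phi, ENNReal.toReal_mul, ENNReal.toReal_ofReal (by positivity),
    ENNReal.tsum_toReal_eq fun k => ENNReal.ofReal_ne_top]
  congr 2 with k
  rw [Theta_eq_Theta_one_exp_log_sub_log (hX _ (by simp)) hY, ENNReal.toReal_ofReal (hg.nonneg _)]

theorem exists_abs_le_mul_rpow_of_isBigO {f : ℕ → ℝ} {s : ℝ}
    (hf : f =O[atTop] fun k : ℕ => (k : ℝ) ^ s) :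
    ∃ B, ∀ k : ℕ, |f (k + 1)| ≤ B * (k + 1 : ℝ) ^ s := by
  have hshift := hf.comp_tendsto (tendsto_add_atTop_nat 1)
  have hpos : ∀ k : ℕ, 0 < ((k + 1 : ℕ) : ℝ) ^ s := fun k => by positivity
  obtain ⟨B, hB⟩ := (isBigO_nat_atTop_iff fun k hk => absurd hk (hpos k).ne').mp hshift
  refine ⟨B, fun k => ?_⟩
  have hk := hB k
  simp only [Function.comp_apply, norm_eq_abs, abs_of_pos (hpos k)] at hk
  exact_mod_cast hk

theorem mul_log_rpow_inv {α y : ℝ} (hα : α ≠ 0) (hy : 0 < y) : α * log (y ^ α⁻¹) = log y := by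
  rw [log_rpow hy, mul_inv_cancel_left₀ hα]

variable {X X' Y Y' : ℕ → ℝ} {α ε A B : ℝ}

theorem exists_toReal_phi_le (hθ : 0 < θ) (hθπ : θ < π) (hα : 1 < α)
    (hXpos : ∀ k, 1 ≤ k → 0 < X k)
    (hX : ∀ k : ℕ, |log (X (k + 1)) - α * log (k + 1)| ≤ A) :
    ∃ K, ∀ j, 0 < Y j → (phi θ X Y j).toReal ≤ K * Y j ^ α⁻¹ := by
  obtain ⟨K, hK⟩ :=
    (isLocalizedSigmoid_Theta_one_exp hθ hθπ).exists_summable_and_tsum_le hα hX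
  refine ⟨1 / π * K, fun j hj => ?_⟩
  have hle := (hK (Y j ^ α⁻¹) (rpow_pos_of_pos hj _)).2
  rw [mul_log_rpow_inv (by positivity) hj] at hle
  rw [toReal_phi_eq hθ hθπ hXpos hj, mul_assoc]
  gcongr

theorem exists_abs_log_sub_log_le_of_phi_eq (hθ : 0 < θ) (hθπ : θ < π) (hα : 1 < α)
    (hε0 : 0 ≤ ε) (hε : ε < α + 1)
    (hXpos : ∀ k, 1 ≤ k → 0 < X k) (hX'pos : ∀ k, 1 ≤ k → 0 < X' k)
    (hX : ∀ k : ℕ, |log (X (k + 1)) - α * log (k + 1)| ≤ A)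
    (hX' : ∀ k : ℕ, |log (X' (k + 1)) - log (X (k + 1))| ≤ B * (k + 1 : ℝ) ^ (-ε)) :
    ∃ K, ∀ j, 1 ≤ Y j → 0 < Y' j → phi θ X' Y' j = phi θ X Y j →
      |log (Y' j) - log (Y j)| ≤ K * (Y j ^ α⁻¹) ^ (-ε) := by
  obtain ⟨K, hK⟩ :=
    (isLocalizedSigmoid_Theta_one_exp hθ hθπ).exists_abs_sub_le hα hε0 hε hX hX'
  refine ⟨K, fun j hYj hY'j hphi => ?_⟩
  have hYj0 : 0 < Y j := one_pos.trans_le hYj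
  have hle := hK (Y j ^ α⁻¹) (one_le_rpow hYj (by positivity)) (log (Y' j))
  rw [mul_log_rpow_inv (by positivity) hYj0] at hle
  have htoReal := congrArg ENNReal.toReal hphi
  rw [toReal_phi_eq hθ hθπ hX'pos hY'j, toReal_phi_eq hθ hθπ hXpos hYj0] at htoReal
  exact hle (mul_left_cancel₀ (by positivity) htoReal)

theorem natCast_isBigO_toReal_phi {Q : ℕ → ℝ} (hQpos : ∀ k, 1 ≤ k → 0 < Q k)
    (hQ : (fun k : ℕ => Q k - (k : ℝ)) =O[atTop] fun _ : ℕ => (1 : ℝ))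
    (hphi : ∀ j, 1 ≤ j → phi θ X Y j = ENNReal.ofReal (Q j)) :
    (fun j : ℕ => (j : ℝ)) =O[atTop] fun j => (phi θ X Y j).toReal := by
  refine (natCast_isBigO_of_sub_isBigO_one hQ).congr' .rfl ?_
  filter_upwards [eventually_ge_atTop 1] with j hj
  rw [hphi j hj, ENNReal.toReal_ofReal (hQpos j hj).le]

theorem isBigO_rpow_neg_of_isBigO {ι : Type*} {l : Filter ι} {f g : ι → ℝ} (hε : 0 ≤ ε)
    (hf : ∀ᶠ i in l, 0 < f i) (hg : ∀ᶠ i in l, 0 ≤ g i) (hfg : f =O[l] g) :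
    (fun i => g i ^ (-ε)) =O[l] fun i => f i ^ (-ε) := by
  have hpow : (fun i => f i ^ ε) =O[l] fun i => g i ^ ε := hfg.rpow hε hg
  refine (hpow.inv_rev ?_).congr' ?_ ?_
  · filter_upwards [hf] with i hi h using absurd h (rpow_pos_of_pos hi ε).ne'
  · filter_upwards [hg] with i hi using (rpow_neg hi ε).symm
  · filter_upwards [hf] with i hi using (rpow_neg hi.le ε).symm

theorem eventually_one_le_of_natCast_isBigO_rpow {f : ℕ → ℝ} {s : ℝ} (hs : 0 < s)
    (hpos : ∀ᶠ j in atTop, 0 < f j) (hf : (fun j : ℕ => (j : ℝ)) =O[atTop] fun j => f j ^ s) :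
    ∀ᶠ j in atTop, 1 ≤ f j := by
  have hnorm := hf.trans_tendsto_norm_atTop
    (tendsto_norm_atTop_atTop.comp tendsto_natCast_atTop_atTop)
  filter_upwards [hnorm.eventually_ge_atTop 1, hpos] with j hj hpos_j
  rw [norm_of_nonneg (rpow_nonneg hpos_j.le s)] at hj
  exact not_lt.mp fun hlt => hj.not_gt (rpow_lt_one hpos_j.le hlt hs)

theorem stmt_18_general (hθ : 0 < θ) (hθπ : θ < π) (hα : 1 < α) (hε0 : 0 ≤ ε) (hε : ε < α + 1)
    (hXpos : ∀ k, 1 ≤ k → 0 < X k) (hX'pos : ∀ k, 1 ≤ k → 0 < X' k)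
    (hYpos : ∀ j, 1 ≤ j → 0 < Y j) (hY'pos : ∀ j, 1 ≤ j → 0 < Y' j)
    (hX : (fun k : ℕ => log (X k) - α * log k) =O[atTop] fun _ : ℕ => (1 : ℝ))
    (hX' : (fun k : ℕ => log (X' k) - log (X k)) =O[atTop] fun k : ℕ => (k : ℝ) ^ (-ε))
    (hphi : ∀ j, 1 ≤ j → phi θ X' Y' j = phi θ X Y j)
    (hgrowth : (fun j : ℕ => (j : ℝ)) =O[atTop] fun j => (phi θ X Y j).toReal) :
    (fun j : ℕ => log (Y' j) - log (Y j)) =O[atTop] fun j : ℕ => (j : ℝ) ^ (-ε) := by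
  obtain ⟨A, hA⟩ := exists_abs_le_mul_rpow_of_isBigO (s := 0) (by simpa using hX)
  obtain ⟨B, hB⟩ := exists_abs_le_mul_rpow_of_isBigO hX'
  have hx : ∀ k : ℕ, |log (X (k + 1)) - α * log (k + 1)| ≤ A := by simpa using hA
  obtain ⟨K, hK⟩ := exists_toReal_phi_le (Y := Y) hθ hθπ hα hXpos hx
  obtain ⟨L, hL⟩ := exists_abs_log_sub_log_le_of_phi_eq (Y := Y) (Y' := Y')
    hθ hθπ hα hε0 hε hXpos hX'pos hx hB
  have hY : ∀ᶠ j in atTop, 0 < Y j := (eventually_ge_atTop 1).mono hYpos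
  have hYpow : ∀ᶠ j in atTop, 0 ≤ Y j ^ α⁻¹ := hY.mono fun j hj => rpow_nonneg hj.le _
  have hjY : (fun j : ℕ => (j : ℝ)) =O[atTop] fun j => Y j ^ α⁻¹ := by
    refine hgrowth.trans (.of_bound K ?_)
    filter_upwards [hY, hYpow] with j hj hpow
    simpa only [norm_of_nonneg ENNReal.toReal_nonneg, norm_of_nonneg hpow] using hK j hj
  have hlarge : ∀ᶠ j in atTop, 1 ≤ Y j :=
    eventually_one_le_of_natCast_isBigO_rpow (by positivity) hY hjY
  refine IsBigO.trans (.of_bound L ?_)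
    (isBigO_rpow_neg_of_isBigO hε0 (tendsto_natCast_atTop_atTop.eventually_gt_atTop 0) hYpow hjY)
  filter_upwards [eventually_ge_atTop 1, hlarge, hYpow] with j hj hYj hpow
  simpa only [norm_eq_abs, abs_of_nonneg (rpow_nonneg hpow _)] using
    hL j hYj (hY'pos j hj) (hphi j hj)

end Theta

theorem stmt_18 (θ : ℝ) (hθ : 0 < θ) (hθπ : θ < Real.pi)
    (Q : ℕ → ℝ) (hQpos : ∀ k, 1 ≤ k → 0 < Q k)
    (hQ : (fun k : ℕ => Q k - (k : ℝ)) =O[atTop] fun _ : ℕ => (1 : ℝ))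
    (ε : ℝ) (hε0 : 0 < ε) (hε : ε < 1 + θ / Real.pi + 1)
    (X X' Y Y' : ℕ → ℝ)
    (hXpos : ∀ k, 1 ≤ k → 0 < X k) (hX'pos : ∀ k, 1 ≤ k → 0 < X' k)
    (hYpos : ∀ j, 1 ≤ j → 0 < Y j) (hY'pos : ∀ j, 1 ≤ j → 0 < Y' j)
    (hX : (fun k : ℕ => Real.log (X k) - (1 + θ / Real.pi) * Real.log k)
      =o[atTop] fun _ : ℕ => (1 : ℝ))
    (hX' : (fun k : ℕ => Real.log (X' k) - Real.log (X k)) =O[atTop]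
      fun k : ℕ => (k : ℝ) ^ (-ε))
    (hfix : ∀ j, 1 ≤ j → phi θ X Y j = ENNReal.ofReal (Q j))
    (hfix' : ∀ j, 1 ≤ j → phi θ X' Y' j = ENNReal.ofReal (Q j)) :
    (fun j : ℕ => Real.log (Y' j) - Real.log (Y j)) =O[atTop]
      fun j : ℕ => (j : ℝ) ^ (-ε) :=
  stmt_18_general hθ hθπ (lt_add_of_pos_right 1 (div_pos hθ Real.pi_pos)) hε0.le hε
    hXpos hX'pos hYpos hY'pos hX.isBigO hX' (fun j hj => (hfix' j hj).trans (hfix j hj).symm)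
    (natCast_isBigO_toReal_phi hQpos hQ hfix)
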